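/- arXiv:1611.06979 — 2 statements merged into one kernel-verified Lean document; each statement's English description precedes it below -/
import Mathlib

section
/- For each 1 ≤ k ≤ n, the sets {π ∈ S_n(321) : bl(π) = k} and {π ∈ S_n(321) : ldes(π⁻¹) = n−k} have the same cardinality. -/
/-- A permutation avoids the pattern 321 if it has no decreasing subsequence of length 3. -/
def Avoids321 {n : ℕ} (π : Equiv.Perm (Fin n)) : Prop :=
  ∀ i j k : Fin n, i < j → j < k → ¬ (π k < π j ∧ π j < π i)

/-- The set of positions of left-to-right maxima of a permutation. -/
def LtrSet {n : ℕ} (π : Equiv.Perm (Fin n)) : Finset (Fin n) :=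
  Finset.univ.filter (fun i => ∀ j, j ≤ i → π j ≤ π i)

/-- The block number of a permutation (0-based version of
`|{1 ≤ i ≤ n : π(j) ≤ i for all j ≤ i}|`). -/
def blockNum {n : ℕ} (π : Equiv.Perm (Fin n)) : ℕ :=
  (Finset.univ.filter (fun i : Fin n => ∀ j, j ≤ i → π j ≤ i)).card

/-- The descent set of a permutation, as a set of 1-based positions in `[n-1]`. -/
def DesSet {n : ℕ} (π : Equiv.Perm (Fin n)) : Finset ℕ :=
  Finset.image (fun i : Fin n => (i : ℕ) + 1)
    (Finset.univ.filter (fun i : Fin n => ∃ h : (i : ℕ) + 1 < n, π ⟨(i : ℕ) + 1, h⟩ < π i))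

/-- The last descent of a permutation (`0` if there is no descent). -/
def ldes {n : ℕ} (π : Equiv.Perm (Fin n)) : ℕ := (DesSet π).sup id

def IsH (n : ℕ) (h : ℕ → ℕ) : Prop :=
  Monotone h ∧ (∀ i, i ≤ h i) ∧ (∀ i, i < n → h i < n) ∧ ∀ i, n ≤ i → h i = i

def st1 (n : ℕ) (h : ℕ → ℕ) : ℕ := Nat.count (fun i => h i = i) n

noncomputable def dd (h : ℕ → ℕ) : ℕ := sInf {d | ∀ v, d ≤ v → ∃ i, h i = v}

noncomputable def st2 (n : ℕ) (h : ℕ → ℕ) : ℕ := n - dd h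

theorem dd_spec {n : ℕ} {h : ℕ → ℕ} (H : IsH n h) : ∀ v, dd h ≤ v → ∃ i, h i = v :=
  Nat.sInf_mem (s := {d | ∀ v, d ≤ v → ∃ i, h i = v}) ⟨n, fun v hv => ⟨v, H.2.2.2 v hv⟩⟩

theorem dd_le {h : ℕ → ℕ} {d : ℕ} (H : ∀ v, d ≤ v → ∃ i, h i = v) : dd h ≤ d :=
  Nat.sInf_le (s := {d | ∀ v, d ≤ v → ∃ i, h i = v}) H

theorem dd_le_n {n : ℕ} {h : ℕ → ℕ} (H : IsH n h) : dd h ≤ n :=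
  dd_le (fun v hv => ⟨v, H.2.2.2 v hv⟩)

theorem dd_lt {n : ℕ} {h : ℕ → ℕ} (H : IsH n h) {p : ℕ} (hp : ∀ i, h i ≠ p) : p < dd h := by
  by_contra hc
  obtain ⟨i, hi⟩ := dd_spec H p (by omega)
  exact hp i hi

/-- Abstract generating tree. -/
structure IsTree (s : ℕ → (ℕ → ℕ) → ℕ) (c : ℕ → (ℕ → ℕ) → ℕ → (ℕ → ℕ)) : Prop where
  zero : ∀ h, IsH 0 h → s 0 h = 0
  mem : ∀ n h j, IsH n h → j ≤ s n h → IsH (n+1) (c n h j)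
  stat : ∀ n h j, IsH n h → j ≤ s n h → s (n+1) (c n h j) = j + 1
  inj : ∀ n h h' j, IsH n h → IsH n h' → j ≤ s n h → j ≤ s n h' → c n h j = c n h' j → h = h'
  surj : ∀ n g, IsH (n+1) g → ∃ h j, IsH n h ∧ j ≤ s n h ∧ c n h j = g

noncomputable def IsTree.equiv {s c} (T : IsTree s c) (n : ℕ) :
    {x : {h // IsH n h} × ℕ // x.2 ≤ s n x.1.1} ≃ {h // IsH (n+1) h} :=
  Equiv.ofBijective (fun x => ⟨c n x.1.1.1 x.1.2, T.mem n _ _ x.1.1.2 x.2⟩) (by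
    constructor
    · rintro ⟨⟨⟨h, hh⟩, j⟩, hj⟩ ⟨⟨⟨h', hh'⟩, j'⟩, hj'⟩ e
      simp only [Subtype.mk.injEq] at e hj hj'
      have e1 := T.stat n h j hh hj
      have e2 := T.stat n h' j' hh' hj'
      rw [e] at e1
      have : j = j' := by omega
      subst this
      have := T.inj n h h' j hh hh' hj hj' e
      subst this
      rfl
    · rintro ⟨g, hg⟩
      obtain ⟨h, j, hh, hj, e⟩ := T.surj n g hg
      exact ⟨⟨⟨⟨h, hh⟩, j⟩, hj⟩, Subtype.ext e⟩)

theorem IsTree.equiv_stat {s c} (T : IsTree s c) (n : ℕ) (x) :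
    s (n+1) (T.equiv n x).1 = x.1.2 + 1 :=
  T.stat n _ _ x.1.1.2 x.2

theorem tree_equiv {s c s' c'} (T : IsTree s c) (T' : IsTree s' c') (n : ℕ) :
    ∃ e : {h // IsH n h} ≃ {h // IsH n h}, ∀ h, s' n (e h).1 = s n h.1 := by
  induction n with
  | zero => exact ⟨Equiv.refl _, fun h => by rw [T.zero _ h.2]; exact T'.zero _ h.2⟩
  | succ n ih =>
    obtain ⟨e, he⟩ := ih
    let m : {x : {h // IsH n h} × ℕ // x.2 ≤ s n x.1.1} ≃
        {x : {h // IsH n h} × ℕ // x.2 ≤ s' n x.1.1} :=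
      Equiv.subtypeEquiv (Equiv.prodCongr e (Equiv.refl ℕ)) (fun a => by simp [he])
    refine ⟨(T.equiv n).symm.trans (m.trans (T'.equiv n)), fun h => ?_⟩
    obtain ⟨x, rfl⟩ := (T.equiv n).surjective h
    rw [T.equiv_stat]
    simp only [Equiv.trans_apply, Equiv.symm_apply_apply]
    rw [T'.equiv_stat]
    rfl

noncomputable def ff (h : ℕ → ℕ) (j : ℕ) : ℕ :=
  if j = 0 then 0 else Nat.nth (fun i => h i = i) (j-1) + 1

noncomputable def ch1 (n : ℕ) (h : ℕ → ℕ) (j : ℕ) : ℕ → ℕ :=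
  fun i => if i < ff h j then h i else if i < n then h i + 1 else i

theorem ff_le {n : ℕ} {h : ℕ → ℕ} {j : ℕ} (hj : j ≤ st1 n h) : ff h j ≤ n := by
  unfold ff
  split_ifs with h0
  · omega
  · have := Nat.nth_lt_of_lt_count (p := fun i => h i = i) (n := n) (k := j-1)
      (by unfold st1 at hj; omega)
    omega

theorem inf_fix {n : ℕ} {h : ℕ → ℕ} (H : IsH n h) : ({i | h i = i}).Infinite := by
  refine Set.infinite_of_not_bddAbove ?_
  rintro ⟨b, hb⟩
  have := hb (show max n (b+1) ∈ {i | h i = i} from H.2.2.2 _ (by omega))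
  omega

theorem ff_fix {n : ℕ} {h : ℕ → ℕ} (H : IsH n h) (j : ℕ) (h0 : 0 < ff h j) :
    h (ff h j - 1) = ff h j - 1 := by
  unfold ff at *
  split_ifs at * with h1
  · omega
  · simpa using Nat.nth_mem_of_infinite (inf_fix H) (j-1)

theorem ff_count {n : ℕ} {h : ℕ → ℕ} (H : IsH n h) (j : ℕ) :
    Nat.count (fun i => h i = i) (ff h j) = j := by
  unfold ff
  split_ifs with h1
  · simp [h1]
  · rw [Nat.count_succ, Nat.count_nth_of_infinite (inf_fix H),
      if_pos (Nat.nth_mem_of_infinite (inf_fix H) (j-1))]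
    omega

theorem ff_eq {h : ℕ → ℕ} {f : ℕ} (hf : 0 < f → h (f-1) = f-1) :
    ff h (Nat.count (fun i => h i = i) f) = f := by
  unfold ff
  rcases f with _ | f
  · simp
  · simp at hf
    rw [Nat.count_succ, if_pos hf]
    simp only [Nat.add_eq_zero_iff, one_ne_zero, and_false, if_false, Nat.add_sub_cancel]
    rw [Nat.nth_count (p := fun i => h i = i) hf]

theorem count_congr' {p q : ℕ → Prop} [DecidablePred p] [DecidablePred q] (n : ℕ)
    (H : ∀ i < n, (p i ↔ q i)) : Nat.count p n = Nat.count q n := by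
  induction n with
  | zero => simp
  | succ n ih =>
    rw [Nat.count_succ, Nat.count_succ, ih (fun i hi => H i (by omega))]
    simp [H n (by omega)]

theorem count_stop {p : ℕ → Prop} [DecidablePred p] (f n : ℕ) (hf : f ≤ n)
    (H : ∀ i < n, f ≤ i → ¬ p i) : Nat.count p n = Nat.count p f := by
  induction n, hf using Nat.le_induction with
  | base => rfl
  | succ n hn ih =>
    rw [Nat.count_succ, ih (fun i hi => H i (by omega)), if_neg (H n (by omega) hn)]
    rfl

theorem below_fix {n : ℕ} {h : ℕ → ℕ} (H : IsH n h) (j i : ℕ) (hi : i < ff h j) :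
    h i < ff h j := by
  have := ff_fix H j (by omega)
  have := H.1 (show i ≤ ff h j - 1 by omega)
  omega

theorem tree1 : IsTree st1 ch1 where
  zero := fun h _ => by simp [st1]
  mem := fun n h j H hj => by
    have hf := ff_le hj
    have hb := below_fix H j
    obtain ⟨m, h1, h2, h3⟩ := H
    refine ⟨?_, ?_, ?_, ?_⟩
    · intro a b hab
      have := m hab
      have := h1 b
      have := h2 a
      have := hb a
      unfold ch1
      split_ifs <;> grind
    · intro i
      have := h1 i
      unfold ch1
      split_ifs <;> omega
    · intro i hi
      have := h2 i
      unfold ch1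
      split_ifs <;> omega
    · intro i hi
      unfold ch1
      split_ifs <;> omega
  stat := fun n h j H hj => by
    have hf := ff_le hj
    unfold st1
    rw [Nat.count_succ, if_pos (by unfold ch1; split_ifs <;> omega),
      count_stop (ff h j) n hf, count_congr' (q := fun i => h i = i), ff_count H]
    · intro i hi
      simp [ch1, hi]
    · intro i hi h'
      have := H.2.1 i
      unfold ch1
      split_ifs <;> omega
  inj := fun n h h' j H H' hj hj' e => by
    have key : ∀ h h', IsH n h → IsH n h' → j ≤ st1 n h → j ≤ st1 n h' →
        ch1 n h j = ch1 n h' j → ff h j ≤ ff h' j := by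
      intro h h' H H' hj hj' e
      by_contra hc
      have h1 := ff_fix H j (by omega)
      have h2 := ff_le hj
      have h3 := congrFun e (ff h j - 1)
      have h4 := H'.2.1 (ff h j - 1)
      unfold ch1 at h3
      rw [if_pos (by omega), if_neg (by omega), if_pos (by omega)] at h3
      omega
    have hff : ff h j = ff h' j :=
      le_antisymm (key h h' H H' hj hj' e) (key h' h H' H hj' hj e.symm)
    funext i
    have h3 := congrFun e i
    have := H.2.2.2 i
    have := H'.2.2.2 i
    unfold ch1 at h3
    rw [hff] at h3
    split_ifs at h3 <;> grind
  surj := fun n g H => by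
    classical
    have ex : ∃ f, ∀ i, f ≤ i → i < n → g i ≠ i := ⟨n, fun i h1 h2 => by omega⟩
    obtain ⟨f, hf, hmin⟩ : ∃ f, (∀ i, f ≤ i → i < n → g i ≠ i) ∧
      ∀ f' < f, ¬ (∀ i, f' ≤ i → i < n → g i ≠ i) :=
      ⟨Nat.find ex, Nat.find_spec ex, fun f' h => Nat.find_min ex h⟩
    have hfn : f ≤ n := by
      by_contra hc
      exact hmin n (by omega) (fun i h1 h2 => by omega)
    have hfix : 0 < f → g (f-1) = f-1 := by
      intro h0
      by_contra hc
      refine hmin (f-1) (by omega) (fun i h1 h2 => ?_)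
      rcases Nat.lt_or_ge i f with h | h
      · have : i = f - 1 := by omega
        rwa [this]
      · exact hf i h h2
    obtain ⟨m, h1, h2, h3⟩ := H
    let h : ℕ → ℕ := fun i => if i < f then g i else if i < n then g i - 1 else i
    have hlt : ∀ i < f, g i < f := fun i hi => by
      have := m (show i ≤ f - 1 by omega)
      have := hfix (by omega)
      omega
    have Hh : IsH n h := by
      refine ⟨?_, ?_, ?_, ?_⟩
      · intro a b hab
        have := m hab
        have := h1 b
        have := h2 a
        have := hlt a
        have := hf b
        simp only [h]
        split_ifs <;> grind
      · intro i
        have := h1 i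
        have := hf i
        simp only [h]
        split_ifs <;> grind
      · intro i hi
        have := h2 i
        have := hlt i
        simp only [h]
        split_ifs <;> grind
      · intro i hi
        simp only [h]
        split_ifs <;> omega
    have hfix' : 0 < f → h (f-1) = f-1 := fun h0 => by
      simp only [h]
      rw [if_pos (by omega)]
      exact hfix h0
    refine ⟨h, Nat.count (fun i => h i = i) f, Hh, Nat.count_monotone _ hfn, ?_⟩
    funext i
    unfold ch1
    rw [ff_eq hfix']
    have := h1 i
    have := hf i
    have := h2 i
    have := h3 i
    have := hlt i
    have := h1 n
    have := h2 n
    simp only [h]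
    split_ifs <;> grind

noncomputable def ch2 (n : ℕ) (h : ℕ → ℕ) (j : ℕ) : ℕ → ℕ :=
  fun i => if j < st2 n h then
    (if i < n then (if h i < n - 1 - j then h i else h i + 1) else i) else h i

theorem fix_up {h : ℕ → ℕ} (m : Monotone h) (h1 : ∀ i, i ≤ h i) (i : ℕ) (hi : h i = i)
    (hv : ∀ v, i ≤ v → ∃ k, h k = v) (t : ℕ) (ht : i ≤ t) : h t = t := by
  induction t, ht using Nat.le_induction with
  | base => exact hi
  | succ t ht ih =>
    obtain ⟨k, hk⟩ := hv (t+1) (by omega)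
    have : t < k := by
      by_contra hc
      have := m (show k ≤ t by omega)
      omega
    have := m (show t+1 ≤ k by omega)
    have := h1 (t+1)
    omega

theorem ch2_mem (n h j) (H : IsH n h) : IsH (n+1) (ch2 n h j) := by
    obtain ⟨m, h1, h2, h3⟩ := H
    refine ⟨?_, ?_, ?_, ?_⟩
    · intro a b hab
      have := m hab
      have := h1 b
      have := h2 a
      unfold ch2
      split_ifs <;> grind
    · intro i
      have := h1 i
      unfold ch2
      split_ifs <;> omega
    · intro i hi
      have := h2 i
      have := h3 i
      unfold ch2
      split_ifs <;> grind
    · intro i hi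
      have := h3 i
      unfold ch2
      split_ifs <;> grind

theorem tree2 : IsTree st2 ch2 where
  zero := fun h _ => by simp [st2]
  mem := fun n h j H hj => ch2_mem n h j H
  stat := fun n h j H hj => by
    have Hc := ch2_mem n h j H
    have hdn := dd_le_n H
    rcases Nat.lt_or_ge j (st2 n h) with hlt | hge
    · have hd : dd (ch2 n h j) = n - 1 - j + 1 := by
        unfold st2 at hlt
        apply le_antisymm
        · apply dd_le
          intro v hv
          rcases Nat.lt_or_ge n v with hnv | hnv
          · exact ⟨v, Hc.2.2.2 v hnv⟩
          obtain ⟨i, hi⟩ := dd_spec H (v-1) (by omega)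
          have := H.2.2.2 i
          refine ⟨i, ?_⟩
          unfold ch2 st2
          rw [if_pos hlt, if_pos (by by_contra; grind), if_neg (by omega)]
          omega
        · apply dd_lt Hc
          intro i
          unfold ch2 st2
          rw [if_pos hlt]
          split_ifs <;> omega
      unfold st2 at *
      omega
    · have : ch2 n h j = h := by
        funext i
        unfold ch2
        rw [if_neg (by omega)]
      rw [this]
      unfold st2 at *
      omega
  inj := fun n h h' j H H' hj hj' e => by
    have key : ∀ h h', IsH n h → IsH n h' → 
        ch2 n h j = ch2 n h' j → j < st2 n h → j < st2 n h' := by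
      intro h h' H H' e hl
      by_contra hc
      have h0 : 0 < n := by unfold st2 at hl; omega
      have h3 := congrFun e (n-1)
      have h4 := H'.2.2.1 (n-1)
      have h5 := H.2.1 (n-1)
      unfold ch2 at h3
      rw [if_pos hl, if_neg hc, if_pos (by omega), if_neg (by omega)] at h3
      omega
    have k1 := key h h' H H' e
    have k2 := key h' h H' H e.symm
    funext i
    have h3 := congrFun e i
    have := H.2.2.2 i
    have := H'.2.2.2 i
    unfold ch2 at h3
    split_ifs at h3 <;> grind
  surj := fun n g H => by
    by_cases hg : ∀ i, i < n → g i < n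
    · have hn : g n = n := by
        have := H.2.1 n
        have := H.2.2.1 n
        omega
      have Hg : IsH n g := ⟨H.1, H.2.1, hg, fun i hi => by
        rcases Nat.lt_or_ge n i with h | h
        · exact H.2.2.2 i h
        · have : i = n := by omega
          rw [this, hn]⟩
      refine ⟨g, st2 n g, Hg, le_rfl, ?_⟩
      funext i
      simp [ch2]
    · push Not at hg
      obtain ⟨i0, hi0, hgi0⟩ := hg
      obtain ⟨m, h1, h2, h3⟩ := id H
      have hgn1 : g (n-1) = n := by
        have := m (show i0 ≤ n-1 by omega)
        have := h2 (n-1)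
        omega
      have hds := dd_spec H
      have hnofix : ∀ i, dd g ≤ i → i < n → g i ≠ i := by
        intro i hi hin hgi
        have := fix_up m h1 i hgi (fun v hv => hds v (by omega)) (n-1) (by omega)
        omega
      have hdn : dd g ≤ n := by
        by_contra hc
        have : dd g ≤ n := by
          apply dd_le
          intro v hv
          rcases Nat.lt_or_ge n v with h | h
          · exact ⟨v, h3 v h⟩
          · exact ⟨n-1, by omega⟩
        omega
      have hd0 : 0 < dd g := by
        by_contra hc
        obtain ⟨k, hk⟩ := hds 0 (by omega)
        have := m (Nat.zero_le k)
        exact hnofix 0 (by omega) (by omega) (by omega)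
      obtain ⟨p, hp⟩ : ∃ p, dd g = p + 1 := ⟨dd g - 1, by omega⟩
      have hpr : ∀ i, g i ≠ p := by
        intro i hi
        have : dd g ≤ p := by
          apply dd_le
          intro v hv
          rcases Nat.lt_or_ge p v with h | h
          · exact hds v (by omega)
          · exact ⟨i, by omega⟩
        omega
      let h : ℕ → ℕ := fun i => if i < n then (if g i < p then g i else g i - 1) else i
      have Hh : IsH n h := by
        refine ⟨?_, ?_, ?_, ?_⟩
        · intro a b hab
          have := m hab
          have := h1 b
          have := h2 a
          have := h2 b
          have := hpr a
          have := hpr b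
          simp only [h]
          split_ifs <;> grind
        · intro i
          have := h1 i
          have := hnofix i
          have := hpr i
          simp only [h]
          split_ifs <;> grind
        · intro i hi
          have := h2 i
          simp only [h]
          split_ifs <;> omega
        · intro i hi
          simp only [h]
          split_ifs <;> omega
      have hdh : dd h ≤ p := by
        apply dd_le
        intro v hv
        rcases Nat.lt_or_ge v n with hvn | hvn
        · obtain ⟨i, hi⟩ : ∃ i < n, g i = v + 1 := by
            obtain ⟨i, hi⟩ := hds (v+1) (by omega)
            rcases Nat.lt_or_ge i n with h | h
            · exact ⟨i, h, hi⟩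
            · have := h1 i
              exact ⟨n-1, by omega, by omega⟩
          refine ⟨i, ?_⟩
          simp only [h]
          rw [if_pos hi.1, if_neg (by omega)]
          omega
        · exact ⟨v, Hh.2.2.2 v hvn⟩
      have hj : n - 1 - p < st2 n h := by unfold st2; omega
      refine ⟨h, n-1-p, Hh, hj.le, ?_⟩
      funext i
      unfold ch2
      rw [if_pos hj]
      have hh : n - 1 - (n - 1 - p) = p := by omega
      rw [hh]
      have := hpr i
      have := h1 i
      have := h3 i
      have := h2 i
      have := h1 n
      have := h2 n
      have := m (show n-1 ≤ n by omega)
      simp only [h]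
      split_ifs <;> grind

/-- extension of a permutation to ℕ -/
def pext {n : ℕ} (π : Equiv.Perm (Fin n)) (i : ℕ) : ℕ :=
  if h : i < n then (π ⟨i, h⟩ : ℕ) else i

theorem pext_lt {n : ℕ} (π : Equiv.Perm (Fin n)) {i : ℕ} (h : i < n) : pext π i < n := by
  simp [pext, h]

theorem pext_ge {n : ℕ} (π : Equiv.Perm (Fin n)) {i : ℕ} (h : n ≤ i) : pext π i = i := by
  simp [pext, h]

theorem pext_fin {n : ℕ} (π : Equiv.Perm (Fin n)) (i : Fin n) : pext π i = π i := by
  simp [pext]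

theorem pext_inj {n : ℕ} (π : Equiv.Perm (Fin n)) : Function.Injective (pext π) := by
  intro a b h
  have h1 := @pext_lt n π a
  have h2 := @pext_lt n π b
  have h3 := @pext_ge n π a
  have h4 := @pext_ge n π b
  rcases Nat.lt_or_ge a n with ha | ha <;> rcases Nat.lt_or_ge b n with hb | hb
  · simp only [pext, ha, hb, dif_pos] at h
    have := π.injective (Fin.ext h)
    simpa using this
  all_goals grind

theorem pext_surj {n : ℕ} (π : Equiv.Perm (Fin n)) : Function.Surjective (pext π) := by
  intro v
  rcases Nat.lt_or_ge v n with h | h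
  · refine ⟨(π.symm ⟨v, h⟩ : Fin n), ?_⟩
    rw [pext_fin]
    simp
  · exact ⟨v, pext_ge π h⟩

def rmax (P : ℕ → ℕ) (i : ℕ) : ℕ := (Finset.range (i+1)).sup P

theorem le_rmax (P : ℕ → ℕ) {j i : ℕ} (h : j ≤ i) : P j ≤ rmax P i :=
  Finset.le_sup (f := P) (by simp; omega)

theorem rmax_le (P : ℕ → ℕ) {i b : ℕ} (h : ∀ j ≤ i, P j ≤ b) : rmax P i ≤ b :=
  Finset.sup_le (fun j hj => h j (by simp at hj; omega))

theorem rmax_att (P : ℕ → ℕ) (i : ℕ) : ∃ j ≤ i, P j = rmax P i := by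
  obtain ⟨j, hj, e⟩ := Finset.exists_mem_eq_sup (Finset.range (i+1)) ⟨0, by simp⟩ P
  exact ⟨j, by simp at hj; omega, e.symm⟩

theorem rmax_mem {n : ℕ} (π : Equiv.Perm (Fin n)) : IsH n (rmax (pext π)) := by
  refine ⟨?_, ?_, ?_, ?_⟩
  · intro a b h
    exact rmax_le _ (fun j hj => le_rmax _ (by omega))
  · intro i
    by_contra hc
    have := Finset.card_le_card_of_injOn (s := Finset.range (i+1)) (t := Finset.range i) (pext π)
      (fun j hj => by
        have := le_rmax (pext π) (show j ≤ i by simp at hj; omega)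
        simp; omega) (pext_inj π).injOn
    simp at this
  · intro i hi
    obtain ⟨j, hj, e⟩ := rmax_att (pext π) i
    rw [← e]
    exact pext_lt π (by omega)
  · intro i hi
    apply le_antisymm
    · apply rmax_le
      intro j hj
      have h1 := @pext_lt n π j
      have h2 := @pext_ge n π j
      grind
    · have := le_rmax (pext π) (le_refl i)
      rwa [pext_ge π hi] at this

open Classical in
/-- reconstruction -/
noncomputable def rec321 (h : ℕ → ℕ) (i : ℕ) : ℕ :=
  if ∀ j < i, h j < h i then h i else
    sInf {v | ∀ j, (_ : j < i) → rec321 h j ≠ v}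
termination_by i

theorem rec_pos {h : ℕ → ℕ} {i : ℕ} (hi : ∀ j < i, h j < h i) : rec321 h i = h i := by
  rw [rec321, if_pos hi]

theorem rec_neg {h : ℕ → ℕ} {i : ℕ} (hi : ¬ ∀ j < i, h j < h i) :
    rec321 h i = sInf {v | ∀ j, j < i → rec321 h j ≠ v} := by
  rw [rec321, if_neg hi]

theorem rec_of_avoid {n : ℕ} (π : Equiv.Perm (Fin n)) (ha : Avoids321 π) (i : ℕ) :
    rec321 (rmax (pext π)) i = pext π i := by
  induction i using Nat.strong_induction_on with
  | _ i ih =>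
  by_cases hr : ∀ j < i, rmax (pext π) j < rmax (pext π) i
  · rw [rec_pos hr]
    obtain ⟨j, hj, e⟩ := rmax_att (pext π) i
    rcases Nat.lt_or_ge j i with h | h
    · have := hr j h
      have := le_rmax (pext π) (le_refl j)
      omega
    · have : j = i := by omega
      rw [← e, this]
  · rw [rec_neg hr]
    have hset : {v | ∀ j, j < i → rec321 (rmax (pext π)) j ≠ v} =
        {v | ∀ j, j < i → pext π j ≠ v} := by
      ext v
      constructor
      · intro H j hj
        rw [← ih j hj]; exact H j hj
      · intro H j hj
        rw [ih j hj]; exact H j hj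
    rw [hset]
    have hmem : pext π i ∈ {v | ∀ j, j < i → pext π j ≠ v} := fun j hj e => by
      have := pext_inj π e
      omega
    apply le_antisymm (Nat.sInf_le hmem)
    by_contra hc
    obtain ⟨k, hk⟩ := pext_surj π (sInf {v | ∀ j, j < i → pext π j ≠ v})
    have hm := Nat.sInf_mem ⟨_, hmem⟩
    rw [← hk] at hm hc
    have hik : i < k := by
      rcases Nat.lt_trichotomy k i with h | h | h
      · exact absurd rfl (hm k h)
      · subst h; omega
      · exact h
    push Not at hr
    obtain ⟨j, hj, hle⟩ := hr
    obtain ⟨l, hl, el⟩ := rmax_att (pext π) j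
    have h1 := le_rmax (pext π) (le_refl i)
    have h2 : pext π l ≠ pext π i := fun e => by
      have := pext_inj π e
      omega
    have hkn : k < n := by
      by_contra h
      have := pext_ge π (show n ≤ k by omega)
      have := @pext_lt n π i
      have := @pext_ge n π i
      grind
    have := ha ⟨l, by omega⟩ ⟨i, by omega⟩ ⟨k, hkn⟩ (by simp; omega) (by simpa using hik)
    apply this
    simp only [Fin.lt_def, ← pext_fin]
    omega

theorem rec_unused {h : ℕ → ℕ} (i : ℕ) (h1 : i ≤ h i) :
    ∃ v ≤ h i, ∀ j, j < i → rec321 h j ≠ v := by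
  by_contra hc
  push Not at hc
  have : Finset.range (h i + 1) ⊆ (Finset.range i).image (rec321 h) := by
    intro v hv
    obtain ⟨j, hj, e⟩ := hc v (by simp at hv; omega)
    exact Finset.mem_image.2 ⟨j, by simpa using hj, e⟩
  have := (Finset.card_le_card this).trans Finset.card_image_le
  simp at this
  omega

theorem rec_le {h : ℕ → ℕ} (h1 : ∀ i, i ≤ h i) (i : ℕ) : rec321 h i ≤ h i := by
  by_cases hr : ∀ j < i, h j < h i
  · exact (rec_pos hr).le
  · rw [rec_neg hr]
    obtain ⟨v, hv, hu⟩ := rec_unused i (h1 i)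
    exact (Nat.sInf_le (s := {v | ∀ j, j < i → rec321 h j ≠ v}) hu).trans hv

theorem rec_ne {h : ℕ → ℕ} (h1 : ∀ i, i ≤ h i) (i j : ℕ) (hji : j < i) :
    rec321 h j ≠ rec321 h i := by
  by_cases hr : ∀ j < i, h j < h i
  · rw [rec_pos hr]
    have := rec_le h1 j
    have := hr j hji
    omega
  · rw [rec_neg hr]
    obtain ⟨v, hv, hu⟩ := rec_unused i (h1 i)
    exact Nat.sInf_mem (s := {v | ∀ j, j < i → rec321 h j ≠ v}) ⟨v, hu⟩ j hji

theorem rec_rmax {n : ℕ} {h : ℕ → ℕ} (H : IsH n h) (i : ℕ) : rmax (rec321 h) i = h i := by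
  classical
  apply le_antisymm
  · apply rmax_le
    intro j hj
    exact (rec_le H.2.1 j).trans (H.1 hj)
  · have ex : ∃ j, h j = h i := ⟨i, rfl⟩
    have h1 := Nat.find_spec ex
    have h2 : Nat.find ex ≤ i := Nat.find_min' ex rfl
    have h3 : ∀ j < Nat.find ex, h j < h (Nat.find ex) := fun j hj => by
      have := Nat.find_min ex hj
      have := H.1 (show j ≤ i by omega)
      omega
    have := le_rmax (rec321 h) h2
    rw [rec_pos h3, h1] at this
    exact this

theorem exists_perm {n : ℕ} {h : ℕ → ℕ} (H : IsH n h) :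
    ∃ π : Equiv.Perm (Fin n), Avoids321 π ∧ rmax (pext π) = h := by
  have hlt : ∀ i < n, rec321 h i < n := fun i hi =>
    (rec_le H.2.1 i).trans_lt (H.2.2.1 i hi)
  let F : Fin n → Fin n := fun i => ⟨rec321 h i, hlt i i.2⟩
  have hinj : Function.Injective F := by
    intro a b e
    simp only [F, Fin.mk.injEq] at e
    rcases Nat.lt_trichotomy a b with h | h | h
    · exact absurd e (rec_ne H.2.1 _ _ h)
    · exact Fin.ext h
    · exact absurd e.symm (rec_ne H.2.1 _ _ h)
  let π : Equiv.Perm (Fin n) := Equiv.ofBijective F (Finite.injective_iff_bijective.1 hinj)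
  have hπ : ∀ i, (π i : ℕ) = rec321 h i := fun i => rfl
  have hp : pext π = rec321 h := by
    funext i
    rcases Nat.lt_or_ge i n with hi | hi
    · simp [pext, hi, hπ]
    · rw [pext_ge π hi, rec_pos, H.2.2.2 i hi]
      intro j hj
      rw [H.2.2.2 i hi]
      rcases Nat.lt_or_ge j n with hj' | hj'
      · have := H.2.2.1 j hj'
        omega
      · rw [H.2.2.2 j hj']; exact hj
  refine ⟨π, ?_, ?_⟩
  · rintro i j k hij hjk ⟨h1, h2⟩
    rw [Fin.lt_def, hπ, hπ] at h1 h2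
    have hr : ¬ ∀ l < (j : ℕ), h l < h j := by
      intro hr
      rw [rec_pos hr] at h2
      have := rec_le H.2.1 i
      have := hr i hij
      omega
    rw [rec_neg hr] at h1
    refine absurd (Nat.sInf_le ?_) (not_le.2 h1)
    intro l hl
    exact rec_ne H.2.1 _ _ (hl.trans hjk)
  · funext i
    rw [hp, rec_rmax H]

noncomputable def permEquiv (n : ℕ) : {π : Equiv.Perm (Fin n) // Avoids321 π} ≃ {h // IsH n h} :=
  Equiv.ofBijective (fun π => ⟨rmax (pext π.1), rmax_mem π.1⟩) (by
    constructor
    · rintro ⟨π, hπ⟩ ⟨σ, hσ⟩ e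
      simp only [Subtype.mk.injEq] at e ⊢
      ext i
      rw [← pext_fin, ← pext_fin, ← rec_of_avoid π hπ, ← rec_of_avoid σ hσ, e]
    · rintro ⟨h, H⟩
      obtain ⟨π, h1, h2⟩ := exists_perm H
      exact ⟨⟨π, h1⟩, Subtype.ext h2⟩)

theorem block_eq {n : ℕ} (π : Equiv.Perm (Fin n)) : blockNum π = st1 n (rmax (pext π)) := by
  unfold blockNum st1
  rw [Nat.count_eq_card_filter_range]
  refine Finset.card_bij (fun i _ => (i : ℕ)) ?_ ?_ ?_
  · intro i hi
    simp only [Finset.mem_filter, Finset.mem_univ, true_and, Finset.mem_range] at hi ⊢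
    refine ⟨i.2, le_antisymm ?_ ((rmax_mem π).2.1 i)⟩
    apply rmax_le
    intro j hj
    have := hi ⟨j, by omega⟩ hj
    rw [Fin.le_def, ← pext_fin] at this
    exact this
  · intro a _ b _ e
    exact Fin.ext e
  · intro i hi
    simp only [Finset.mem_filter, Finset.mem_univ, true_and, Finset.mem_range] at hi
    refine ⟨⟨i, hi.1⟩, ?_, rfl⟩
    simp only [Finset.mem_filter, Finset.mem_univ, true_and]
    intro j hj
    rw [Fin.le_def, ← pext_fin]
    have := le_rmax (pext π) (show (j : ℕ) ≤ i from hj)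
    simp only
    omega

theorem ldes_le {n : ℕ} (σ : Equiv.Perm (Fin n)) (d : ℕ) :
    ldes σ ≤ d ↔ ∀ i, (h : i + 1 < n) → d ≤ i → σ ⟨i, by omega⟩ < σ ⟨i+1, h⟩ := by
  unfold ldes DesSet
  rw [Finset.sup_le_iff]
  simp only [Finset.mem_image, Finset.mem_filter, Finset.mem_univ, true_and, id]
  constructor
  · intro H i h hd
    by_contra hc
    have hne : σ ⟨i, by omega⟩ ≠ σ ⟨i+1, h⟩ := fun e => by
      have := σ.injective e
      simp at this
    have := H (i+1) ⟨⟨i, by omega⟩, ⟨h, lt_of_le_of_ne (not_lt.1 hc) hne.symm⟩, rfl⟩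
    omega
  · rintro H b ⟨i, ⟨h, hlt⟩, rfl⟩
    by_contra hc
    have := H i h (by omega)
    exact absurd hlt (not_lt.2 this.le)

theorem ldes_le_iff {n : ℕ} (π : Equiv.Perm (Fin n)) (d : ℕ) :
    ldes π⁻¹ ≤ d ↔ ∀ v, d ≤ v → ∃ i, rmax (pext π) i = v := by
  rw [ldes_le]
  constructor
  · intro H v hv
    rcases Nat.lt_or_ge v n with hvn | hvn
    · have mono : ∀ w, v ≤ w → (hw : w < n) → π⁻¹ ⟨v, hvn⟩ ≤ π⁻¹ ⟨w, hw⟩ := by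
        intro w hw
        induction w, hw using Nat.le_induction with
        | base => intro _; exact le_rfl
        | succ w hw ih =>
          intro hwn
          exact (ih (by omega)).trans (H w hwn (by omega)).le
      refine ⟨(π⁻¹ ⟨v, hvn⟩ : Fin n), le_antisymm ?_ ?_⟩
      · apply rmax_le
        intro j hj
        have hjn : j < n := by omega
        by_contra hc
        have hc' : v < pext π j := by omega
        have := mono (pext π j) hc'.le (pext_lt π hjn)
        have e : (⟨pext π j, pext_lt π hjn⟩ : Fin n) = π ⟨j, hjn⟩ := Fin.ext (pext_fin π ⟨j, hjn⟩)
        rw [e, Equiv.Perm.inv_def, Equiv.symm_apply_apply, Fin.le_def, ← Equiv.Perm.inv_def] at this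
        simp only at this
        have hj' : j = (π⁻¹ ⟨v, hvn⟩ : Fin n) := by omega
        rw [hj', pext_fin] at hc'
        simp at hc'
      · have := le_rmax (pext π) (le_refl ((π⁻¹ ⟨v, hvn⟩ : Fin n) : ℕ))
        rw [pext_fin] at this
        simpa using this
    · exact ⟨v, (rmax_mem π).2.2.2 v hvn⟩
  · intro H i h hd
    obtain ⟨k, hk⟩ := H i hd
    obtain ⟨j, hj, e⟩ := rmax_att (pext π) k
    have hjn : j < n := by
      by_contra hc
      have := pext_ge π (show n ≤ j by omega)
      omega
    have e1 : π⁻¹ ⟨i, by omega⟩ = ⟨j, hjn⟩ := by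
      rw [Equiv.Perm.inv_eq_iff_eq]
      apply Fin.ext
      rw [← pext_fin]
      simp only
      omega
    by_contra hc
    have h1 := le_rmax (pext π) (show ((π⁻¹ ⟨i+1, h⟩ : Fin n) : ℕ) ≤ k by
      have := not_lt.1 hc
      rw [e1, Fin.le_def] at this
      simp only at this
      omega)
    rw [pext_fin] at h1
    simp at h1
    omega

theorem ldes_eq {n : ℕ} (π : Equiv.Perm (Fin n)) : ldes π⁻¹ = dd (rmax (pext π)) :=
  le_antisymm ((ldes_le_iff π _).2 (dd_spec (rmax_mem π))) (dd_le ((ldes_le_iff π _).1 le_rfl))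

/-- The 321-avoiding permutations with `k` blocks are equinumerous with the
321-avoiding permutations whose inverse has last descent `n - k`. -/
theorem card_blockNum_eq_card_ldes_inv (n k : ℕ) (h1 : 1 ≤ k) (h2 : k ≤ n) :
    Nat.card {π : Equiv.Perm (Fin n) // Avoids321 π ∧ blockNum π = k} =
      Nat.card {π : Equiv.Perm (Fin n) // Avoids321 π ∧ ldes π⁻¹ = n - k} := by
  obtain ⟨e, he⟩ := tree_equiv tree1 tree2 n
  let E : {π : Equiv.Perm (Fin n) // Avoids321 π} ≃ {π : Equiv.Perm (Fin n) // Avoids321 π} :=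
    (permEquiv n).trans (e.trans (permEquiv n).symm)
  have hE : ∀ π, st2 n (rmax (pext (E π).1)) = st1 n (rmax (pext π.1)) := by
    intro π
    have h3 : (permEquiv n) (E π) = e (permEquiv n π) := by simp [E]
    have h4 : (permEquiv n (E π)).1 = rmax (pext (E π).1) := rfl
    rw [← h4, h3, he]
    rfl
  refine Nat.card_congr ((Equiv.subtypeSubtypeEquivSubtypeInter _ _).symm.trans
    ((Equiv.subtypeEquiv E ?_).trans (Equiv.subtypeSubtypeEquivSubtypeInter _ _)))
  intro π
  rw [block_eq, ← hE, ldes_eq]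
  have := dd_le_n (rmax_mem (E π).1)
  unfold st2
  omega
end

section
/- For every n ≥ 1 there exists a bijection f from S_n(321) to itself such that for every π ∈ S_n(321): (1) Ltr(f(π)) = Ltr(π), and (2) n − ldes(f(π)⁻¹) = bl(π). Consequently, the joint distribution of (Ltr(π), bl(π)) over S_n(321) equals the joint distribution of (Ltr(π), n − ldes(π⁻¹)). -/
/-- Number of elements of `A` below `k`. -/
def cnt (A : Finset ℕ) (k : ℕ) : ℕ := (A.filter (· < k)).card

/-- Admissible value sets. -/
def Val (A : Finset ℕ) (n h : ℕ) (B : Finset ℕ) : Prop :=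
  cnt A n = cnt B n + h ∧ ∀ k < n, cnt B k + 1 ≤ cnt A (k + 1)

def tst (A : Finset ℕ) (n : ℕ) (B : Finset ℕ) : ℕ :=
  ((Finset.range n).filter (fun k => cnt B (k + 1) = cnt A (k + 1))).card

def topRun : ℕ → Finset ℕ → ℕ
  | 0, _ => 0
  | n + 1, B => if n ∈ B then topRun n B + 1 else 0

lemma cnt_succ (A : Finset ℕ) (k : ℕ) : cnt A (k + 1) = cnt A k + if k ∈ A then 1 else 0 := by
  unfold cnt
  split_ifs with h
  · have : A.filter (· < k + 1) = insert k (A.filter (· < k)) := by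
      ext x; simp only [Finset.mem_filter, Finset.mem_insert]
      constructor
      · rintro ⟨h1, h2⟩
        by_cases hx : x = k
        · exact Or.inl hx
        · exact Or.inr ⟨h1, by omega⟩
      · rintro (rfl | ⟨h1, h2⟩)
        · exact ⟨h, by omega⟩
        · exact ⟨h1, by omega⟩
    rw [this, Finset.card_insert_of_notMem (by simp)]
  · congr 1
    ext x; simp only [Finset.mem_filter]
    constructor
    · rintro ⟨h1, h2⟩
      refine ⟨h1, ?_⟩
      have : x ≠ k := fun e => h (e ▸ h1)
      omega
    · rintro ⟨h1, h2⟩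
      exact ⟨h1, by omega⟩

lemma cnt_insert (B : Finset ℕ) (n k : ℕ) (h : k ≤ n) : cnt (insert n B) k = cnt B k := by
  unfold cnt
  rw [Finset.filter_insert, if_neg (by omega)]

lemma topRun_insert (B : Finset ℕ) (n k : ℕ) (h : k ≤ n) :
    topRun k (insert n B) = topRun k B := by
  induction k with
  | zero => rfl
  | succ k ih =>
    simp only [topRun, Finset.mem_insert, ih (by omega)]
    have : k ≠ n := by omega
    simp [this]

lemma tst_succ (A B : Finset ℕ) (n : ℕ) : tst A (n + 1) B =
    tst A n B + if cnt B (n + 1) = cnt A (n + 1) then 1 else 0 := by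
  unfold tst
  rw [Finset.range_add_one, Finset.filter_insert]
  split_ifs
  · rw [Finset.card_insert_of_notMem (by simp)]
  · rfl

lemma tst_insert (A B : Finset ℕ) (n k : ℕ) (h : k ≤ n) : tst A k (insert n B) = tst A k B := by
  unfold tst
  congr 1
  apply Finset.filter_congr
  intro x hx
  rw [cnt_insert _ _ _ (by have := Finset.mem_range.1 hx; omega)]

lemma val_insert (A B : Finset ℕ) (n h k : ℕ) (hk : k ≤ n) :
    Val A k h (insert n B) ↔ Val A k h B := by
  unfold Val
  rw [cnt_insert _ _ _ hk]
  refine and_congr Iff.rfl (forall₂_congr fun j hj => ?_)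
  rw [cnt_insert _ _ _ (by omega)]

lemma val_succ (A B : Finset ℕ) (n h : ℕ) :
    Val A (n + 1) h B ↔ (1 ≤ h + (if n ∈ B then 1 else 0)) ∧
      Val A n (h + (if n ∈ B then 1 else 0) - (if n ∈ A then 1 else 0)) B := by
  unfold Val
  rw [cnt_succ A n, cnt_succ B n]
  have e : (∀ k < n + 1, cnt B k + 1 ≤ cnt A (k + 1)) ↔
      (∀ k < n, cnt B k + 1 ≤ cnt A (k + 1)) ∧ cnt B n + 1 ≤ cnt A (n + 1) := by
    constructor
    · intro h; exact ⟨fun k hk => h k (by omega), h n (by omega)⟩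
    · rintro ⟨h1, h2⟩ k hk
      rcases Nat.lt_succ_iff_lt_or_eq.1 hk with h | rfl
      · exact h1 k h
      · exact h2
  rw [e, cnt_succ A n]
  constructor
  · rintro ⟨h1, h2, h3⟩
    refine ⟨?_, ?_, h2⟩ <;> split_ifs at * <;> omega
  · rintro ⟨h1, h2, h3⟩
    refine ⟨?_, h3, ?_⟩ <;> split_ifs at * <;> omega

open Classical in
noncomputable def SS (A : Finset ℕ) (n h : ℕ) (f : Finset ℕ → Polynomial ℤ) : Polynomial ℤ :=
  ∑ B ∈ (Finset.range n).powerset, if Val A n h B then f B else 0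

lemma SS_succ (A : Finset ℕ) (n h : ℕ) (f : Finset ℕ → Polynomial ℤ) :
    SS A (n + 1) h f =
      (if h = 0 then 0 else SS A n (h - (if n ∈ A then 1 else 0)) f) +
      SS A n (h + 1 - (if n ∈ A then 1 else 0)) (fun B => f (insert n B)) := by
  classical
  unfold SS
  rw [Finset.range_add_one, Finset.sum_powerset_insert (by simp)]
  congr 1
  · split_ifs with h0 hA
    · apply Finset.sum_eq_zero
      intro B hB
      have : n ∉ B := fun hn => by simpa using Finset.mem_powerset.1 hB hn
      rw [if_neg]
      rw [val_succ]; simp [this, h0]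
    all_goals
      apply Finset.sum_congr rfl
      intro B hB
      have : n ∉ B := fun hn => by simpa using Finset.mem_powerset.1 hB hn
      congr 1
      rw [val_succ]
      have : 1 ≤ h := by omega
      simp [*]
  · apply Finset.sum_congr rfl
    intro B hB
    congr 1
    rw [val_succ, val_insert _ _ _ _ _ le_rfl]
    simp

lemma SS_congr (A : Finset ℕ) (n h : ℕ) (f g : Finset ℕ → Polynomial ℤ)
    (H : ∀ B ⊆ Finset.range n, Val A n h B → f B = g B) : SS A n h f = SS A n h g := by
  unfold SS
  apply Finset.sum_congr rfl
  intro B hB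
  split_ifs with hv
  · exact H B (Finset.mem_powerset.1 hB) hv
  · rfl

lemma SS_mul (A : Finset ℕ) (n h : ℕ) (c : Polynomial ℤ) (f : Finset ℕ → Polynomial ℤ) :
    SS A n h (fun B => c * f B) = c * SS A n h f := by
  unfold SS
  rw [Finset.mul_sum]
  apply Finset.sum_congr rfl
  intro B hB
  split_ifs <;> simp

open Polynomial in
noncomputable def TT (A : Finset ℕ) (n h : ℕ) : ℤ[X] := SS A n h (fun B => X ^ tst A n B)
open Polynomial in
noncomputable def ZZ (A : Finset ℕ) (n h : ℕ) : ℤ[X] := SS A n h (fun B => X ^ topRun n B)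
open Polynomial in
noncomputable def NN (A : Finset ℕ) (n h : ℕ) : ℤ[X] := SS A n h (fun _ => 1)

open Polynomial in
lemma TT_succ (A : Finset ℕ) (n h : ℕ) : TT A (n + 1) h = 
    if h = 0 then X * TT A n (1 - (if n ∈ A then 1 else 0)) else
      TT A n (h - (if n ∈ A then 1 else 0)) + TT A n (h + 1 - (if n ∈ A then 1 else 0)) := by
  unfold TT
  have e : SS A (n + 1) h (fun B => X ^ tst A (n + 1) B) =
      SS A (n + 1) h (fun B => (if h = 0 then X else 1) * X ^ tst A n B) := by
    apply SS_congr
    intro B _ hv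
    rw [tst_succ]
    have := hv.1
    by_cases h0 : h = 0
    · rw [if_pos (by omega), if_pos h0]; ring
    · rw [if_neg (by omega), if_neg h0]; ring
  rw [e, SS_mul, SS_succ]
  have e2 : (fun B => (X : ℤ[X]) ^ tst A n (insert n B)) = fun B => X ^ tst A n B := by
    funext B; rw [tst_insert _ _ _ _ le_rfl]
  rw [e2]
  by_cases h0 : h = 0
  · subst h0; simp
  · simp [h0]

open Polynomial in
lemma ZZ_succ (A : Finset ℕ) (n h : ℕ) : ZZ A (n + 1) h = 
    (if h = 0 then 0 else NN A n (h - (if n ∈ A then 1 else 0))) +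
      X * ZZ A n (h + 1 - (if n ∈ A then 1 else 0)) := by
  unfold ZZ NN
  rw [SS_succ, ← SS_mul]
  congr 1
  · split_ifs
    · rfl
    all_goals
      apply SS_congr
      intro B hB _
      have : n ∉ B := fun hn => by simpa using hB hn
      simp [topRun, this]
  · apply SS_congr
    intro B hB _
    simp [topRun, topRun_insert]
    ring

lemma NN_succ (A : Finset ℕ) (n h : ℕ) : NN A (n + 1) h = 
    (if h = 0 then 0 else NN A n (h - (if n ∈ A then 1 else 0))) +
      NN A n (h + 1 - (if n ∈ A then 1 else 0)) := by
  unfold NN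
  rw [SS_succ]

open Polynomial in
lemma ZN (A : Finset ℕ) (n h : ℕ) : ZZ A n h - NN A n h = (X - 1) * ZZ A n (h + 1) := by
  induction n generalizing h with
  | zero =>
    simp [ZZ, NN, SS, Val, cnt, topRun]
  | succ n ih =>
    rw [ZZ_succ, NN_succ, ZZ_succ A n (h + 1), if_neg (by omega : h + 1 ≠ 0)]
    have := ih (h + 1 - (if n ∈ A then 1 else 0))
    have e : h + 1 - (if n ∈ A then 1 else 0) + 1 = h + 1 + 1 - (if n ∈ A then 1 else 0) := by
      split_ifs <;> omega
    rw [e] at this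
    linear_combination (-X) * (-1 : ℤ[X]) * this

open Polynomial in
lemma TZ (A : Finset ℕ) (n h : ℕ) : TT A n h = ZZ A n h := by
  induction n generalizing h with
  | zero =>
    simp [TT, ZZ, SS, tst, topRun]
  | succ n ih =>
    rw [TT_succ, ZZ_succ]
    by_cases h0 : h = 0
    · subst h0; simp [ih]
    · rw [if_neg h0, if_neg h0, ih, ih]
      have := ZN A n (h - (if n ∈ A then 1 else 0))
      have e : h - (if n ∈ A then 1 else 0) + 1 = h + 1 - (if n ∈ A then 1 else 0) := by
        split_ifs <;> omega
      rw [e] at this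
      linear_combination this

open Classical in
lemma count_eq (A : Finset ℕ) (n k : ℕ) :
    ((Finset.range n).powerset.filter (fun B => Val A n 0 B ∧ tst A n B = k)).card =
    ((Finset.range n).powerset.filter (fun B => Val A n 0 B ∧ topRun n B = k)).card := by
  have h := congrArg (fun p => Polynomial.coeff p k) (TZ A n 0)
  have key : ∀ f : Finset ℕ → ℕ,
      (SS A n 0 (fun B => Polynomial.X ^ f B)).coeff k =
      (((Finset.range n).powerset.filter (fun B => Val A n 0 B ∧ f B = k)).card : ℤ) := by
    intro f
    unfold SS
    rw [Polynomial.finsetSum_coeff, Finset.card_filter]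
    push_cast
    apply Finset.sum_congr rfl
    intro B _
    by_cases h1 : Val A n 0 B
    · simp [h1, Polynomial.coeff_X_pow, eq_comm]
    · simp [h1]
  simp only [TT, ZZ, key] at h
  exact_mod_cast h

def LB {n : ℕ} (π : Equiv.Perm (Fin n)) : Finset ℕ := (LtrSet π).image (fun i : Fin n => (π i : ℕ))

lemma mem_ltr {n : ℕ} (π : Equiv.Perm (Fin n)) (i : Fin n) :
    i ∈ LtrSet π ↔ ∀ j, j ≤ i → π j ≤ π i := by simp [LtrSet]

lemma mem_LB {n : ℕ} (π : Equiv.Perm (Fin n)) (v : Fin n) :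
    (v : ℕ) ∈ LB π ↔ π.symm v ∈ LtrSet π := by
  unfold LB
  rw [Finset.mem_image]
  constructor
  · rintro ⟨i, hi, he⟩
    have : π i = v := Fin.ext he
    rw [← this]; simpa using hi
  · intro h
    exact ⟨_, h, by simp⟩

lemma cnt_image {n : ℕ} (A : Finset (Fin n)) (f : Fin n → Fin n) (hf : Function.Injective f)
    (k : ℕ) : cnt (A.image (fun i : Fin n => (f i : ℕ))) k = (A.filter (fun i => (f i : ℕ) < k)).card := by
  unfold cnt
  rw [Finset.filter_image, Finset.card_image_of_injective]
  intro a b h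
  exact hf (Fin.ext h)

lemma cnt_LB {n : ℕ} (π : Equiv.Perm (Fin n)) (k : ℕ) :
    cnt (LB π) k = ((LtrSet π).filter (fun i => (π i : ℕ) < k)).card :=
  cnt_image _ π π.injective k

lemma cnt_LA {n : ℕ} (A : Finset (Fin n)) (k : ℕ) :
    cnt (A.image (fun i : Fin n => (i : ℕ))) k = (A.filter (fun i : Fin n => (i : ℕ) < k)).card :=
  cnt_image A id Function.injective_id k

lemma exists_ge {n : ℕ} (π : Equiv.Perm (Fin n)) (i : Fin n) : ∃ j, j ≤ i ∧ i ≤ π j := by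
  by_contra! hcon
  have h := Finset.card_le_card_of_injOn (s := Finset.Iic i) (t := Finset.Iio i) π
    (fun j hj => by simpa using hcon j (by simpa using hj)) π.injective.injOn
  simp at h

lemma exists_max {n : ℕ} (π : Equiv.Perm (Fin n)) (i : Fin n) :
    ∃ j ∈ LtrSet π, j ≤ i ∧ ∀ l, l ≤ i → π l ≤ π j := by
  obtain ⟨j, hj, hm⟩ := Finset.exists_max_image (Finset.Iic i) π ⟨i, by simp⟩
  simp only [Finset.mem_Iic] at hj hm
  exact ⟨j, (mem_ltr _ _).2 fun l hl => hm l (hl.trans hj), hj, hm⟩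

lemma ltr_le {n : ℕ} (π : Equiv.Perm (Fin n)) (i : Fin n) (hi : i ∈ LtrSet π) : i ≤ π i := by
  obtain ⟨j, hj, h⟩ := exists_ge π i
  exact h.trans ((mem_ltr _ _).1 hi j hj)

lemma filter_sub {n : ℕ} (π : Equiv.Perm (Fin n)) (k : ℕ) :
    (LtrSet π).filter (fun i => (π i : ℕ) < k) ⊆ (LtrSet π).filter (fun i : Fin n => (i : ℕ) < k) := by
  intro i hi
  rw [Finset.mem_filter] at *
  exact ⟨hi.1, lt_of_le_of_lt (ltr_le π i hi.1) hi.2⟩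

lemma val_LB {n : ℕ} (π : Equiv.Perm (Fin n)) :
    Val ((LtrSet π).image (fun i : Fin n => (i : ℕ))) n 0 (LB π) := by
  refine ⟨?_, fun k hk => ?_⟩
  · rw [cnt_LA, cnt_LB, Finset.filter_true_of_mem (fun i _ => i.2),
      Finset.filter_true_of_mem (fun i _ => (π i).2), add_zero]
  · rw [cnt_LA, cnt_LB]
    obtain ⟨j, hj, hjk, hm⟩ := exists_max π ⟨k, hk⟩
    obtain ⟨l, hl, hl'⟩ := exists_ge π ⟨k, hk⟩
    have hkj : k ≤ (π j : ℕ) := hl'.trans (hm l hl)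
    have hjk' : (j : ℕ) ≤ k := hjk
    have hn : j ∉ (LtrSet π).filter (fun i => (π i : ℕ) < k) := by
      simp only [Finset.mem_filter]; omega
    rw [← Finset.card_insert_of_notMem hn]
    apply Finset.card_le_card
    intro i hi
    rw [Finset.mem_insert] at hi
    rcases hi with rfl | hi
    · exact Finset.mem_filter.2 ⟨hj, by omega⟩
    · have := filter_sub π k hi
      rw [Finset.mem_filter] at *
      exact ⟨this.1, by omega⟩

lemma blockNum_eq {n : ℕ} (π : Equiv.Perm (Fin n)) :
    blockNum π = tst ((LtrSet π).image (fun i : Fin n => (i : ℕ))) n (LB π) := by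
  unfold blockNum tst
  rw [← Finset.card_map Fin.valEmbedding]
  congr 1
  ext k
  simp only [Finset.mem_map, Finset.mem_filter, Finset.mem_univ, true_and, Fin.valEmbedding_apply,
    Finset.mem_range]
  have key : ∀ i : Fin n, (∀ j, j ≤ i → π j ≤ i) ↔
      cnt (LB π) (i + 1) = cnt ((LtrSet π).image (fun i : Fin n => (i : ℕ))) (i + 1) := by
    intro i
    rw [cnt_LA, cnt_LB]
    constructor
    · intro h
      congr 1
      apply (filter_sub π _).antisymm
      intro j hj
      rw [Finset.mem_filter] at *
      have : π j ≤ i := h j (by rw [Fin.le_def]; omega)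
      rw [Fin.le_def] at this
      exact ⟨hj.1, by omega⟩
    · intro h j hj
      have e := Finset.eq_of_subset_of_card_le (filter_sub π (i + 1)) h.ge
      obtain ⟨l, hl, hli, hm⟩ := exists_max π i
      have : l ∈ (LtrSet π).filter (fun j : Fin n => (j : ℕ) < i + 1) :=
        Finset.mem_filter.2 ⟨hl, by rw [Fin.le_def] at hli; omega⟩
      rw [← e, Finset.mem_filter] at this
      refine (hm j hj).trans ?_
      rw [Fin.le_def]; omega
  constructor
  · rintro ⟨i, hi, rfl⟩
    exact ⟨i.2, (key i).1 hi⟩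
  · rintro ⟨hk, h⟩
    exact ⟨⟨k, hk⟩, (key ⟨k, hk⟩).2 h, rfl⟩

lemma not_ltr {n : ℕ} (π : Equiv.Perm (Fin n)) (i : Fin n) (hi : i ∉ LtrSet π) :
    ∃ j, j < i ∧ π i < π j := by
  rw [mem_ltr] at hi
  push Not at hi
  obtain ⟨j, h1, h2⟩ := hi
  refine ⟨j, lt_of_le_of_ne h1 ?_, h2⟩
  rintro rfl
  exact lt_irrefl _ h2

lemma des_iff {n : ℕ} (π : Equiv.Perm (Fin n)) (hπ : Avoids321 π) (i : ℕ) (h : i + 1 < n) :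
    (π⁻¹ ⟨i + 1, h⟩ < π⁻¹ ⟨i, by omega⟩) ↔ i ∉ LB π ∧ i + 1 ∈ LB π := by
  have e1 := mem_LB π ⟨i, by omega⟩
  have e2 := mem_LB π ⟨i + 1, h⟩
  simp only at e1 e2
  rw [e1, e2]
  change π.symm _ < π.symm _ ↔ _
  set a := π.symm ⟨i, by omega⟩ with ha
  set b := π.symm ⟨i + 1, h⟩ with hb
  have pa : π a = ⟨i, by omega⟩ := by simp [ha]
  have pb : π b = ⟨i + 1, h⟩ := by simp [hb]
  have hab : π a < π b := by rw [pa, pb, Fin.lt_def]; simp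
  constructor
  · intro hlt
    constructor
    · intro hA
      exact absurd ((mem_ltr _ _).1 hA b hlt.le) (not_le.2 hab)
    · by_contra hB
      obtain ⟨j, h1, h2⟩ := not_ltr π b hB
      exact hπ j b a h1 hlt ⟨hab, h2⟩
  · rintro ⟨hA, hB⟩
    obtain ⟨j, h1, h2⟩ := not_ltr π a hA
    by_contra hc
    have hc : a ≤ b := not_lt.1 hc
    have h3 := (mem_ltr _ _).1 hB j (h1.le.trans hc)
    rw [pb] at h3
    rw [pa] at h2
    rw [Fin.le_def] at h3
    rw [Fin.lt_def] at h2
    simp only at h2 h3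
    have : π j = π b := by rw [pb]; apply Fin.ext; simp only; omega
    have := π.injective this
    rw [this] at h1
    exact absurd h1 (not_lt.2 hc)

lemma topRun_spec (n : ℕ) (B : Finset ℕ) : topRun n B ≤ n ∧
    (∀ i, n - topRun n B ≤ i → i < n → i ∈ B) ∧
    (topRun n B < n → n - topRun n B - 1 ∉ B) := by
  induction n with
  | zero => simp [topRun]
  | succ n ih =>
    obtain ⟨h1, h2, h3⟩ := ih
    unfold topRun
    split_ifs with h
    · refine ⟨by omega, fun i hi hi' => ?_, fun hl => ?_⟩
      · by_cases e : i = n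
        · rwa [e]
        · exact h2 i (by omega) (by omega)
      · have := h3 (by omega)
        rwa [show n + 1 - (topRun n B + 1) - 1 = n - topRun n B - 1 by omega]
    · refine ⟨by omega, fun i hi hi' => by omega, fun _ => by simpa using h⟩

lemma ldes_eq_s14 {n : ℕ} (hn : 1 ≤ n) (π : Equiv.Perm (Fin n)) (hπ : Avoids321 π) :
    n - ldes π⁻¹ = topRun n (LB π) := by
  obtain ⟨h1, h2, h3⟩ := topRun_spec n (LB π)
  have hlast : n - 1 ∈ LB π := by
    have := mem_LB π ⟨n - 1, by omega⟩
    simp only at this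
    rw [this, mem_ltr]
    intro j _
    rw [Equiv.apply_symm_apply, Fin.le_def]
    simp only
    omega
  suffices h : ldes π⁻¹ = n - topRun n (LB π) by omega
  have hmem : ∀ m, m ∈ DesSet π⁻¹ ↔ ∃ i, i + 1 < n ∧ (i ∉ LB π ∧ i + 1 ∈ LB π) ∧ m = i + 1 := by
    intro m
    unfold DesSet
    simp only [Finset.mem_image, Finset.mem_filter, Finset.mem_univ, true_and]
    constructor
    · rintro ⟨i, ⟨h, hd⟩, rfl⟩
      exact ⟨i, h, (des_iff π hπ i h).1 hd, rfl⟩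
    · rintro ⟨i, h, hd, rfl⟩
      exact ⟨⟨i, by omega⟩, ⟨h, (des_iff π hπ i h).2 hd⟩, rfl⟩
  unfold ldes
  apply le_antisymm
  · apply Finset.sup_le
    intro m hm
    obtain ⟨i, hi, ⟨hA, hB⟩, rfl⟩ := (hmem m).1 hm
    by_contra hc
    simp only [id, not_le] at hc
    exact hA (h2 i (by omega) (by omega))
  · by_cases ht : topRun n (LB π) < n
    · have h4 := h3 ht
      have h5 : n - topRun n (LB π) ≠ n := by
        intro e; rw [e] at h4; exact h4 hlast
      have : n - topRun n (LB π) ∈ DesSet π⁻¹ := by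
        rw [hmem]
        refine ⟨n - topRun n (LB π) - 1, by omega, ⟨h4, ?_⟩, by omega⟩
        exact h2 _ (by omega) (by omega)
      exact Finset.le_sup (f := id) this
    · have : n - topRun n (LB π) = 0 := by omega
      rw [this]; exact Nat.zero_le _

lemma mono_ltr {n : ℕ} (π : Equiv.Perm (Fin n)) (i j : Fin n) (hj : j ∈ LtrSet π) (h : i < j) :
    π i < π j :=
  lt_of_le_of_ne ((mem_ltr _ _).1 hj i h.le) (fun e => h.ne (π.injective e))

lemma mono_not_ltr {n : ℕ} (π : Equiv.Perm (Fin n)) (hπ : Avoids321 π) (i j : Fin n)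
    (hi : i ∉ LtrSet π) (h : i < j) : π i < π j := by
  by_contra hc
  have : π j < π i := lt_of_le_of_ne (not_lt.1 hc) (fun e => h.ne' (π.injective e))
  obtain ⟨l, h1, h2⟩ := not_ltr π i hi
  exact hπ l i j h1 h ⟨this, h2⟩

lemma eq_on {n : ℕ} (π σ : Equiv.Perm (Fin n)) (p : Fin n → Prop)
    (h1 : ∀ i j, p i → p j → i < j → π i < π j) (h2 : ∀ i j, p i → p j → i < j → σ i < σ j)
    (h : ∀ v, p (π.symm v) ↔ p (σ.symm v)) : ∀ i, p i → π i = σ i := by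
  have a1 : StrictMono (fun i : {i // p i} => π i) := fun i j hij => h1 i j i.2 j.2 hij
  have a2 : StrictMono (fun i : {i // p i} => σ i) := fun i j hij => h2 i j i.2 j.2 hij
  have : (fun i : {i // p i} => π i) = (fun i : {i // p i} => σ i) := by
    rw [← StrictMono.range_inj a1 a2]
    ext v
    constructor
    · rintro ⟨i, rfl⟩
      exact ⟨⟨σ.symm (π i), (h _).1 (by simpa using i.2)⟩, by simp⟩
    · rintro ⟨i, rfl⟩
      exact ⟨⟨π.symm (σ i), (h _).2 (by simpa using i.2)⟩, by simp⟩
  intro i hi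
  exact congrFun this ⟨i, hi⟩

lemma LB_inj {n : ℕ} (π σ : Equiv.Perm (Fin n)) (hπ : Avoids321 π) (hσ : Avoids321 σ)
    (hA : LtrSet π = LtrSet σ) (hB : LB π = LB σ) : π = σ := by
  have h : ∀ v, π.symm v ∈ LtrSet π ↔ σ.symm v ∈ LtrSet π := by
    intro v
    conv_rhs => rw [hA]
    rw [← mem_LB, ← mem_LB, hB]
  ext1 i
  by_cases hi : i ∈ LtrSet π
  · exact eq_on π σ (· ∈ LtrSet π) (fun i j _ hj => mono_ltr π i j hj)
      (fun i j _ hj => mono_ltr σ i j (hA ▸ hj)) h i hi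
  · exact eq_on π σ (· ∉ LtrSet π) (fun i j hi _ => mono_not_ltr π hπ i j hi)
      (fun i j hi _ => mono_not_ltr σ hσ i j (hA ▸ hi)) (fun v => not_congr (h v)) i hi

lemma exists_orderIso {n : ℕ} (p q : Fin n → Prop) (h : Nat.card {i // p i} = Nat.card {i // q i}) :
    Nonempty ({i // p i} ≃o {i // q i}) := by
  classical
  rw [Nat.card_eq_fintype_card, Nat.card_eq_fintype_card] at h
  exact ⟨(Fintype.orderIsoFinOfCardEq {i // p i} h).symm.trans
    (Fintype.orderIsoFinOfCardEq {i // q i} rfl)⟩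

open Classical in
lemma rank_eq {n : ℕ} (π : Equiv.Perm (Fin n)) (p q : Fin n → Prop) (hpq : ∀ i, p i ↔ q (π i))
    (hm : ∀ i j, p i → p j → i < j → π i < π j) (i : Fin n) (hi : p i) :
    (Finset.univ.filter (fun j => p j ∧ j < i)).card =
      (Finset.univ.filter (fun v => q v ∧ v < π i)).card := by
  apply Finset.card_equiv π
  intro j
  simp only [Finset.mem_filter, Finset.mem_univ, true_and, ← hpq]
  refine and_congr_right fun hj => ⟨hm j i hj hi, fun h => ?_⟩
  by_contra hc
  rcases lt_or_eq_of_le (not_lt.1 hc) with h' | h'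
  · exact absurd (hm i j hi hj h') (not_lt.2 h.le)
  · rw [h'] at h; exact lt_irrefl _ h

open Classical in
lemma split_card {n : ℕ} (p p' : Fin n → Prop) (hp : ∀ j, p' j ↔ ¬ p j) (i : Fin n) :
    (Finset.univ.filter (fun j => p j ∧ j < i)).card +
      (Finset.univ.filter (fun j => p' j ∧ j < i)).card = i := by
  have := Finset.card_filter_add_card_filter_not (s := Finset.Iio i) p
  rw [Fin.card_Iio] at this
  rw [← this]
  congr 2 <;> ext j <;> simp [and_comm, hp]

open Classical in
lemma cnt_classical {n : ℕ} (S : Finset (Fin n)) (p : Fin n → Prop) (hp : ∀ j, p j ↔ j ∈ S)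
    (i : Fin n) :
    cnt (S.image (fun i : Fin n => (i : ℕ))) i =
      (Finset.univ.filter (fun j => p j ∧ j < i)).card := by
  rw [cnt_LA]
  congr 1
  ext j
  simp [hp]

lemma cnt_mono (A : Finset ℕ) {j k : ℕ} (h : j ≤ k) : cnt A j ≤ cnt A k := by
  apply Finset.card_le_card
  intro x hx
  rw [Finset.mem_filter] at *
  exact ⟨hx.1, by omega⟩

lemma cnt_lip (A : Finset ℕ) {j k : ℕ} (h : j ≤ k) : cnt A k ≤ cnt A j + (k - j) := by
  induction k, h using Nat.le_induction with
  | base => simp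
  | succ k hk ih => rw [cnt_succ]; split_ifs <;> omega

lemma exists_perm_s14 {n : ℕ} (A0 : Finset (Fin n)) (B : Finset ℕ) (hB : B ⊆ Finset.range n)
    (hv : Val (A0.image (fun i : Fin n => (i : ℕ))) n 0 B) :
    ∃ π : Equiv.Perm (Fin n), Avoids321 π ∧ LtrSet π = A0 ∧ LB π = B := by
  classical
  set B0 : Finset (Fin n) := Finset.univ.filter (fun i : Fin n => (i : ℕ) ∈ B) with hB0
  have hBB : B0.image (fun i : Fin n => (i : ℕ)) = B := by
    ext x
    simp only [hB0, Finset.mem_image, Finset.mem_filter, Finset.mem_univ, true_and]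
    constructor
    · rintro ⟨i, hi, rfl⟩; exact hi
    · intro hx; exact ⟨⟨x, Finset.mem_range.1 (hB hx)⟩, hx, rfl⟩
  rw [← hBB] at hv
  obtain ⟨hv1, hv2⟩ := hv
  have hcard : A0.card = B0.card := by
    rw [cnt_LA, cnt_LA, Finset.filter_true_of_mem (fun i _ => i.2),
      Finset.filter_true_of_mem (fun i _ => i.2), add_zero] at hv1
    exact hv1
  obtain ⟨e1⟩ := exists_orderIso (· ∈ A0) (· ∈ B0) (by simpa using hcard)
  obtain ⟨e2⟩ := exists_orderIso (· ∉ A0) (· ∉ B0) (by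
    rw [Nat.card_eq_fintype_card, Nat.card_eq_fintype_card,
      Fintype.card_subtype_compl, Fintype.card_subtype_compl]
    simp [hcard])
  let π : Equiv.Perm (Fin n) := Equiv.subtypeCongr e1.toEquiv e2.toEquiv
  have p1 : ∀ i (h : i ∈ A0), π i = e1 ⟨i, h⟩ := by
    intro i h
    simp [π, Equiv.subtypeCongr, Equiv.sumCompl_symm_apply_of_pos h]
  have p2 : ∀ i (h : i ∉ A0), π i = e2 ⟨i, h⟩ := by
    intro i h
    simp [π, Equiv.subtypeCongr, Equiv.sumCompl_symm_apply_of_neg h]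
  have hmem : ∀ i, i ∈ A0 ↔ π i ∈ B0 := by
    intro i
    by_cases h : i ∈ A0
    · rw [p1 i h]; simp only [h, true_iff]; exact (e1 ⟨i, h⟩).2
    · rw [p2 i h]; simp only [h, false_iff]; exact (e2 ⟨i, h⟩).2
  have m1 : ∀ i j, i ∈ A0 → j ∈ A0 → i < j → π i < π j := by
    intro i j hi hj h
    rw [p1 i hi, p1 j hj]
    exact e1.strictMono (show (⟨i, hi⟩ : {i // i ∈ A0}) < ⟨j, hj⟩ from h)
  have m2 : ∀ i j, i ∉ A0 → j ∉ A0 → i < j → π i < π j := by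
    intro i j hi hj h
    rw [p2 i hi, p2 j hj]
    exact e2.strictMono (show (⟨i, hi⟩ : {i // i ∉ A0}) < ⟨j, hj⟩ from h)
  clear_value π
  have hs : ∀ (S : Finset (Fin n)) (i : Fin n), (i : ℕ) ∈ S.image (fun i : Fin n => (i : ℕ)) ↔ i ∈ S := by
    intro S i
    simp [Fin.val_inj]
  have g1 : ∀ i ∈ A0, i ≤ π i := by
    intro i hi
    by_contra hc
    have hc' : (π i : ℕ) < i := by simpa using hc
    have r := rank_eq π (· ∈ A0) (· ∈ B0) hmem m1 i hi
    rw [← cnt_classical A0 (· ∈ A0) (fun _ => Iff.rfl),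
      ← cnt_classical B0 (· ∈ B0) (fun _ => Iff.rfl)] at r
    have a := hv2 (π i) (π i).2
    have b := cnt_mono (A0.image (fun i : Fin n => (i : ℕ))) (show (π i : ℕ) + 1 ≤ i from hc')
    omega
  have g2 : ∀ i, i ∉ A0 → π i < i := by
    intro i hi
    by_contra hc
    have hc' : (i : ℕ) ≤ π i := by simpa using hc
    have r := rank_eq π (· ∉ A0) (· ∉ B0) (fun i => not_congr (hmem i)) m2 i hi
    have s1 := split_card (· ∈ A0) (· ∉ A0) (fun _ => Iff.rfl) i
    have s2 := split_card (· ∈ B0) (· ∉ B0) (fun _ => Iff.rfl) (π i)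
    rw [← cnt_classical A0 (· ∈ A0) (fun _ => Iff.rfl)] at s1
    rw [← cnt_classical B0 (· ∈ B0) (fun _ => Iff.rfl)] at s2
    have a := hv2 i i.2
    rw [cnt_succ, if_neg (by rw [hs]; exact hi)] at a
    have b := cnt_lip (B0.image (fun i : Fin n => (i : ℕ))) hc'
    omega
  have hL : LtrSet π = A0 := by
    ext i
    constructor
    · intro h
      by_contra hi
      exact absurd (ltr_le π i h) (not_le.2 (g2 i hi))
    · intro h
      rw [mem_ltr]
      intro j hj
      rcases hj.lt_or_eq with hj | rfl
      · by_cases hjA : j ∈ A0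
        · exact (m1 j i hjA h hj).le
        · exact ((g2 j hjA).trans hj).le.trans (g1 i h)
      · exact le_rfl
  refine ⟨π, ?_, hL, ?_⟩
  · rintro i j k hij hjk ⟨h1, h2⟩
    by_cases hj : j ∈ A0
    · rw [← hL] at hj
      exact absurd (mono_ltr π i j hj hij) (not_lt.2 h2.le)
    · by_cases hk : k ∈ A0
      · rw [← hL] at hk
        exact absurd (mono_ltr π j k hk hjk) (not_lt.2 h1.le)
      · exact absurd (m2 j k hj hk hjk) (not_lt.2 h1.le)
  · ext x
    by_cases hx : x < n
    · have := mem_LB π ⟨x, hx⟩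
      simp only at this
      rw [this, hL, hmem, Equiv.apply_symm_apply]
      simp [hB0]
    · constructor
      · intro h
        obtain ⟨i, _, rfl⟩ := Finset.mem_image.1 h
        exact absurd (π i).2 hx
      · intro h
        exact absurd (Finset.mem_range.1 (hB h)) hx

open Classical in
lemma fiber_card {n : ℕ} (s : Equiv.Perm (Fin n) → ℕ) (A0 : Finset (Fin n)) (k : ℕ)
    (t : Finset ℕ → ℕ)
    (hst : ∀ π, Avoids321 π → LtrSet π = A0 → s π = t (LB π)) :
    Nat.card {π : {π : Equiv.Perm (Fin n) // Avoids321 π} // (LtrSet π.1, s π.1) = (A0, k)} =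
    ((Finset.range n).powerset.filter
      (fun B => Val (A0.image (fun i : Fin n => (i : ℕ))) n 0 B ∧ t B = k)).card := by
  rw [← Fintype.card_coe, ← Nat.card_eq_fintype_card]
  refine Nat.card_congr (Equiv.ofBijective (fun π => ⟨LB π.1.1, ?_⟩) ⟨?_, ?_⟩)
  · obtain ⟨⟨π, hπ⟩, h⟩ := π
    simp only [Prod.mk.injEq] at h
    obtain ⟨h1, h2⟩ := h
    simp only [Finset.mem_filter, Finset.mem_powerset]
    refine ⟨?_, ?_, ?_⟩
    · intro x hx
      obtain ⟨i, _, rfl⟩ := Finset.mem_image.1 hx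
      exact Finset.mem_range.2 (π i).2
    · rw [← h1]; exact val_LB π
    · rw [← hst π hπ h1]; exact h2
  · rintro ⟨⟨π, hπ⟩, h⟩ ⟨⟨σ, hσ⟩, h'⟩ he
    simp only [Prod.mk.injEq] at h h'
    simp only [Subtype.mk.injEq] at he ⊢
    exact LB_inj π σ hπ hσ (h.1.trans h'.1.symm) he
  · rintro ⟨B, hB⟩
    simp only [Finset.mem_filter, Finset.mem_powerset] at hB
    obtain ⟨π, h1, h2, h3⟩ := exists_perm_s14 A0 B hB.1 hB.2.1
    refine ⟨⟨⟨π, h1⟩, ?_⟩, ?_⟩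
    · simp only [Prod.mk.injEq]
      exact ⟨h2, by rw [hst π h1 h2, h3]; exact hB.2.2⟩
    · simp only [Subtype.mk.injEq]
      exact h3

/-- There is a bijection of `S_n(321)` onto itself preserving the set of
left-to-right maxima and carrying the statistic `bl(π)` to `n - ldes(π⁻¹)`. -/
theorem exists_ltr_preserving_bijection (n : ℕ) (hn : 1 ≤ n) :
    ∃ f : {π : Equiv.Perm (Fin n) // Avoids321 π} ≃ {π : Equiv.Perm (Fin n) // Avoids321 π},
      ∀ π : {π : Equiv.Perm (Fin n) // Avoids321 π},
        LtrSet ((f π : {π : Equiv.Perm (Fin n) // Avoids321 π}) : Equiv.Perm (Fin n)) =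
            LtrSet (π : Equiv.Perm (Fin n)) ∧
          n - ldes (((f π : {π : Equiv.Perm (Fin n) // Avoids321 π}) : Equiv.Perm (Fin n)))⁻¹ =
            blockNum (π : Equiv.Perm (Fin n)) := by
  classical
  have key : ∀ c : Finset (Fin n) × ℕ,
      Nonempty ({π : {π : Equiv.Perm (Fin n) // Avoids321 π} //
        (LtrSet π.1, blockNum π.1) = c} ≃
      {π : {π : Equiv.Perm (Fin n) // Avoids321 π} //
        (LtrSet π.1, n - ldes (π.1)⁻¹) = c}) := by
    rintro ⟨A0, k⟩
    apply Finite.card_eq.1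
    rw [fiber_card (fun π => blockNum π) A0 k (tst (A0.image (fun i : Fin n => (i : ℕ))) n)
        (fun π _ h => by rw [← h]; exact blockNum_eq π),
      fiber_card (fun π => n - ldes π⁻¹) A0 k (topRun n) (fun π h _ => ldes_eq_s14 hn π h)]
    exact count_eq _ n k
  refine ⟨Equiv.ofFiberEquiv (fun c => (key c).some), fun π => ?_⟩
  have := Equiv.ofFiberEquiv_map (fun c => (key c).some) π
  simp only [Prod.mk.injEq] at this
  exact this
end
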